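/- arXiv:1604.08194 — 6 statements merged into one kernel-verified Lean document; each statement's English description precedes it below -/
import Mathlib

section
/- Per-step mirror descent inequality: in the Bregman setup, let x ∈ Q, v ∈ E, and let x⁺ = Mirr_x(v) be the minimizer over y ∈ Q of ⟪v, y − x⟫ + V_x(y). Then for every u ∈ Q, ⟪v, x − u⟫ ≤ (1/2)‖v‖² + V_x(u) − V_{x⁺}(u). -/
/-!
The first-order optimality condition for the convex-constrained minimizer `x⁺` reads
`0 ≤ ⟪v + ∇d(x⁺) - ∇d(x), u - x⁺⟫` for `u ∈ Q`. The three-point identity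
`⟪∇d(x⁺) - ∇d(x), u - x⁺⟫ = V_x(u) - V_{x⁺}(u) - V_x(x⁺)` turns it into a bound on `⟪v, x⁺ - u⟫`.
The remaining term `⟪v, x - x⁺⟫ - V_x(x⁺)` is at most `‖v‖² / 2`, by strong convexity
`V_x(x⁺) ≥ ‖x⁺ - x‖² / 2` and Young's inequality.
-/

open RealInnerProductSpace

/-- The Bregman divergence `V_x(y) = d(y) - d(x) - ⟪∇d(x), y - x⟫`. -/
noncomputable def BregmanV {E : Type*} [NormedAddCommGroup E] [InnerProductSpace ℝ E]
    (d : E → ℝ) (Dd : E → E) (x y : E) : ℝ :=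
  d y - d x - ⟪Dd x, y - x⟫

/-- The variational inequality satisfied by a minimizer of the mirror step over a convex set. -/
theorem mirror_optimality
    {E : Type*} [NormedAddCommGroup E] [InnerProductSpace ℝ E] [CompleteSpace E]
    {Q : Set E} (hQcv : Convex ℝ Q) {d : E → ℝ} {Dd : E → E} {x v p u : E}
    (hdiff : HasGradientAt d (Dd p) p) (hp : p ∈ Q) (hu : u ∈ Q)
    (hmin : ∀ y ∈ Q, ⟪v, p - x⟫ + BregmanV d Dd x p ≤ ⟪v, y - x⟫ + BregmanV d Dd x y) :
    0 ≤ ⟪v, u - p⟫ + (⟪Dd p, u - p⟫ - ⟪Dd x, u - p⟫) := by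
  have hlin (w : E) : HasFDerivAt (fun y => ⟪w, y - x⟫) (innerSL ℝ w) p :=
    (innerSL ℝ w).hasFDerivAt.comp p ((hasFDerivAt_id p).sub_const x)
  have hloc : IsLocalMinOn (fun y => ⟪v, y - x⟫ + BregmanV d Dd x y) Q p :=
    IsMinOn.localize (isMinOn_iff.2 hmin)
  have hder := (hlin v).add ((hdiff.hasFDerivAt.sub_const (d x)).sub (hlin (Dd x)))
  have h := hloc.hasFDerivWithinAt_nonneg hder.hasFDerivWithinAt
    (sub_mem_posTangentConeAt_of_segment_subset (hQcv.segment_subset hp hu))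
  simpa using h

/-- **Per-step mirror descent inequality.**
In the Bregman setup, let `x ∈ Q`, `v ∈ E`, and let `x⁺ = Mirr_x(v)` be the minimizer
over `y ∈ Q` of `⟪v, y - x⟫ + V_x(y)`. Then for every `u ∈ Q`,
`⟪v, x - u⟫ ≤ (1/2)‖v‖² + V_x(u) - V_{x⁺}(u)`. -/
theorem mirror_descent_step_inequality
    {E : Type*} [NormedAddCommGroup E] [InnerProductSpace ℝ E] [CompleteSpace E]
    (Q : Set E) (hQne : Q.Nonempty) (hQcl : IsClosed Q) (hQcv : Convex ℝ Q)
    (d : E → ℝ) (Dd : E → E) (hdiff : ∀ x, HasGradientAt d (Dd x) x)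
    (hsc : ∀ x y, d y ≥ d x + ⟪Dd x, y - x⟫ + (1 / 2) * ‖y - x‖ ^ 2)
    (x v xplus : E) (hxQ : x ∈ Q) (hxplusQ : xplus ∈ Q)
    (hmin : ∀ y ∈ Q,
      ⟪v, xplus - x⟫ + BregmanV d Dd x xplus ≤ ⟪v, y - x⟫ + BregmanV d Dd x y) :
    ∀ u ∈ Q, ⟪v, x - u⟫ ≤ (1 / 2) * ‖v‖ ^ 2 + BregmanV d Dd x u - BregmanV d Dd xplus u := by
  intro u hu
  have hopt := mirror_optimality hQcv (hdiff xplus) hxplusQ hu hmin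
  have hstrong := hsc x xplus
  have hyoung : 0 ≤ ‖v + (xplus - x)‖ ^ 2 := sq_nonneg _
  rw [norm_add_sq_real] at hyoung
  simp only [BregmanV]
  simp only [inner_sub_right] at *
  linarith
end

section
/- Objective-step inequality: in the Bregman setup, let f : E → ℝ be convex on Q, let x ∈ Q, and let v_f ∈ E be a subgradient of f at x on Q, i.e. f(u) ≥ f(x) + ⟪v_f, u − x⟫ for all u ∈ Q. Let h > 0 and x⁺ = Mirr_x(h·v_f). Then for every u ∈ Q, h·(f(x) − f(u)) ≤ (h²/2)‖v_f‖² + V_x(u) − V_{x⁺}(u). -/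
/-!
Since `Q` is convex, minimality of `x⁺` gives the variational inequality
`⟪h • vf + ∇d(x⁺) - ∇d(x), u - x⁺⟫ ≥ 0` for every `u ∈ Q`. Splitting
`⟪h • vf, x - u⟫ = ⟪h • vf, x - x⁺⟫ + ⟪h • vf, x⁺ - u⟫`, the second term is at most
`⟪∇d(x⁺) - ∇d(x), u - x⁺⟫`, which equals `V_x(u) - V_{x⁺}(u) - V_x(x⁺)` (three-point identity).
Strong convexity gives `V_x(x⁺) ≥ ‖x⁺ - x‖² / 2`, and Young's inequality absorbs the first term
into `‖h • vf‖² / 2 + ‖x⁺ - x‖² / 2`.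
-/

open RealInnerProductSpace

/-- First-order optimality condition for the mirror step. -/
theorem mirror_step_variational
    {E : Type*} [NormedAddCommGroup E] [InnerProductSpace ℝ E] [CompleteSpace E]
    {Q : Set E} (hQcv : Convex ℝ Q)
    {d : E → ℝ} {Dd : E → E} (hdiff : ∀ x, HasGradientAt d (Dd x) x)
    {x v z : E} (hz : z ∈ Q)
    (hmin : ∀ y ∈ Q, ⟪v, z - x⟫ + BregmanV d Dd x z ≤ ⟪v, y - x⟫ + BregmanV d Dd x y)
    {u : E} (hu : u ∈ Q) : 0 ≤ ⟪v + Dd z - Dd x, u - z⟫ := by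
  have hlin (w : E) : HasFDerivAt (fun y : E => ⟪w, y - x⟫) (innerSL ℝ w) z := by
    simpa [inner_sub_right] using (innerSL ℝ w).hasFDerivAt.sub_const (x := z) ⟪w, x⟫
  have hder := (hlin v).add
    ((((hdiff z).hasFDerivAt).sub_const (d x)).sub (hlin (Dd x)))
  have hloc : IsLocalMinOn
      ((fun y : E => ⟪v, y - x⟫) + ((fun y => d y - d x) - fun y => ⟪Dd x, y - x⟫)) Q z :=
    IsMinOn.localize (fun y hy => hmin y hy)
  have key := hloc.hasFDerivWithinAt_nonneg hder.hasFDerivWithinAt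
    (sub_mem_posTangentConeAt_of_segment_subset (hQcv.segment_subset hz hu))
  simp only [add_apply, sub_apply, innerSL_apply_apply,
    InnerProductSpace.toDual_apply_apply] at key
  rw [inner_sub_left, inner_add_left]
  linarith

/-- **Objective-step inequality.**
In the Bregman setup, let `f` be convex on `Q`, `x ∈ Q`, and let `v_f` be a subgradient
of `f` at `x` on `Q`. Let `h > 0` and `x⁺ = Mirr_x(h·v_f)`. Then for every `u ∈ Q`,
`h·(f(x) - f(u)) ≤ (h²/2)‖v_f‖² + V_x(u) - V_{x⁺}(u)`. -/
theorem mirror_descent_objective_step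
    {E : Type*} [NormedAddCommGroup E] [InnerProductSpace ℝ E] [CompleteSpace E]
    (Q : Set E) (hQne : Q.Nonempty) (hQcl : IsClosed Q) (hQcv : Convex ℝ Q)
    (d : E → ℝ) (Dd : E → E) (hdiff : ∀ x, HasGradientAt d (Dd x) x)
    (hsc : ∀ x y, d y ≥ d x + ⟪Dd x, y - x⟫ + (1 / 2) * ‖y - x‖ ^ 2)
    (f : E → ℝ) (hf : ConvexOn ℝ Q f)
    (x : E) (hxQ : x ∈ Q)
    (vf : E) (hvf : ∀ u ∈ Q, f x + ⟪vf, u - x⟫ ≤ f u)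
    (h : ℝ) (hh : 0 < h)
    (xplus : E) (hxplusQ : xplus ∈ Q)
    (hmin : ∀ y ∈ Q,
      ⟪h • vf, xplus - x⟫ + BregmanV d Dd x xplus ≤ ⟪h • vf, y - x⟫ + BregmanV d Dd x y) :
    ∀ u ∈ Q, h * (f x - f u) ≤
      h ^ 2 / 2 * ‖vf‖ ^ 2 + BregmanV d Dd x u - BregmanV d Dd xplus u := by
  intro u hu
  have hvar := mirror_step_variational hQcv hdiff hxplusQ hmin hu
  have hsub := mul_le_mul_of_nonneg_left (hvf u hu) hh.le
  have hstrong := hsc x xplus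
  -- Young's inequality, as nonnegativity of a square
  have hyoung : 0 ≤ ‖h • vf + (xplus - x)‖ ^ 2 := sq_nonneg _
  rw [norm_add_sq_real, norm_smul, mul_pow, Real.norm_eq_abs, sq_abs] at hyoung
  simp only [BregmanV]
  simp only [inner_sub_left, inner_add_left, inner_sub_right, real_inner_smul_left]
    at hvar hsub hstrong hyoung ⊢
  linarith
end

section
/- Constraint-step decrease: in the Bregman setup, let g : E → ℝ be convex on Q, let ε_g > 0, M_g > 0, and set h_g = ε_g/M_g². Let x ∈ Q with g(x) > ε_g, let v_g ∈ E be a subgradient of g at x on Q with ‖v_g‖ ≤ M_g, and let x⁺ = Mirr_x(h_g·v_g). Then for every u ∈ Q with g(u) ≤ 0, V_{x⁺}(u) ≤ V_x(u) − ε_g²/(2M_g²). -/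
/-!
The optimality condition of the mirror step, `⟪h v + ∇d(x⁺) - ∇d(x), u - x⁺⟫ ≥ 0`, combines with
the three-point identity for Bregman divergences to give
`V_{x⁺}(u) ≤ V_x(u) - V_x(x⁺) - h ⟪v, x - u⟫ + h ⟪v, x - x⁺⟫`.
The subgradient inequality gives `⟪v, x - u⟫ ≥ g x - g u > ε`. Cauchy-Schwarz and
`V_x(x⁺) ≥ ‖x⁺ - x‖² / 2` bound `h ⟪v, x - x⁺⟫ - V_x(x⁺)` by
`h M r - r² / 2 ≤ h² M² / 2`, where `r = ‖x⁺ - x‖`. With `h = ε / M²` the total decrease is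
at least `h ε - h² M² / 2 = ε² / (2 M²)`.
-/

open RealInnerProductSpace

/-- First-order optimality condition (variational inequality) for the mirror step. -/
theorem mirror_step_optimality
    {E : Type*} [NormedAddCommGroup E] [InnerProductSpace ℝ E] [CompleteSpace E]
    {Q : Set E} (hQ : Convex ℝ Q) {d : E → ℝ} {Dd : E → E} {x p w : E}
    (hd : HasGradientAt d (Dd p) p) (hp : p ∈ Q)
    (hmin : ∀ y ∈ Q, ⟪w, p - x⟫ + BregmanV d Dd x p ≤ ⟪w, y - x⟫ + BregmanV d Dd x y)
    {u : E} (hu : u ∈ Q) : 0 ≤ ⟪w + Dd p - Dd x, u - p⟫ := by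
  -- Up to an additive constant, the objective is `d` plus a linear functional.
  have hloc : IsLocalMinOn (fun y => d y + ⟪w - Dd x, y⟫) Q p := by
    refine IsMinOn.localize fun y hy => ?_
    have h := hmin y hy
    simp only [BregmanV, inner_sub_right] at h
    simp only [Set.mem_ofPred_eq, inner_sub_left]
    linarith
  have hder : HasFDerivAt (fun y => d y + ⟪w - Dd x, y⟫)
      (InnerProductSpace.toDual ℝ E (Dd p) + innerSL ℝ (w - Dd x)) p :=
    hd.hasFDerivAt.add (innerSL ℝ (w - Dd x)).hasFDerivAt
  have h := hloc.hasFDerivWithinAt_nonneg hder.hasFDerivWithinAt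
    (sub_mem_posTangentConeAt_of_segment_subset (hQ.segment_subset hp hu))
  simp only [add_apply, InnerProductSpace.toDual_apply_apply, innerSL_apply_apply] at h
  rw [← inner_add_left] at h
  convert h using 2
  abel

/-- **Constraint-step decrease.**
In the Bregman setup, let `g` be convex on `Q`, `ε_g > 0`, `M_g > 0`, `h_g = ε_g/M_g²`.
Let `x ∈ Q` with `g(x) > ε_g`, let `v_g` be a subgradient of `g` at `x` on `Q` with
`‖v_g‖ ≤ M_g`, and let `x⁺ = Mirr_x(h_g·v_g)`. Then for every `u ∈ Q` with `g(u) ≤ 0`,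
`V_{x⁺}(u) ≤ V_x(u) - ε_g²/(2M_g²)`. -/
theorem mirror_descent_constraint_step
    {E : Type*} [NormedAddCommGroup E] [InnerProductSpace ℝ E] [CompleteSpace E]
    (Q : Set E) (hQne : Q.Nonempty) (hQcl : IsClosed Q) (hQcv : Convex ℝ Q)
    (d : E → ℝ) (Dd : E → E) (hdiff : ∀ x, HasGradientAt d (Dd x) x)
    (hsc : ∀ x y, d y ≥ d x + ⟪Dd x, y - x⟫ + (1 / 2) * ‖y - x‖ ^ 2)
    (g : E → ℝ) (hg : ConvexOn ℝ Q g)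
    (εg Mg hg' : ℝ) (hεg : 0 < εg) (hMg : 0 < Mg) (hhg' : hg' = εg / Mg ^ 2)
    (x : E) (hxQ : x ∈ Q) (hgx : g x > εg)
    (vg : E) (hvg : ∀ u ∈ Q, g x + ⟪vg, u - x⟫ ≤ g u) (hvgb : ‖vg‖ ≤ Mg)
    (xplus : E) (hxplusQ : xplus ∈ Q)
    (hmin : ∀ y ∈ Q,
      ⟪hg' • vg, xplus - x⟫ + BregmanV d Dd x xplus ≤
        ⟪hg' • vg, y - x⟫ + BregmanV d Dd x y) :
    ∀ u ∈ Q, g u ≤ 0 →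
      BregmanV d Dd xplus u ≤ BregmanV d Dd x u - εg ^ 2 / (2 * Mg ^ 2) := by
  intro u hu hgu
  have hopt := mirror_step_optimality hQcv (hdiff xplus) hxplusQ hmin hu
  have hsub := hvg u hu
  have hstrong := hsc x xplus
  have hcs : -(Mg * ‖xplus - x‖) ≤ ⟪vg, xplus - x⟫ := by
    have h1 := neg_le_of_abs_le (abs_real_inner_le_norm vg (xplus - x))
    have h2 := mul_le_mul_of_nonneg_right hvgb (norm_nonneg (xplus - x))
    linarith
  have hh : 0 < hg' := by rw [hhg']; positivity
  have hstep : hg' * ⟪vg, u - x⟫ ≤ hg' * (-εg) :=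
    mul_le_mul_of_nonneg_left (by linarith) hh.le
  have hcs' := mul_le_mul_of_nonneg_left hcs hh.le
  -- Young: `h M r - r² / 2` is maximal at `r = h M`.
  have hyoung := sq_nonneg (‖xplus - x‖ - hg' * Mg)
  have hval : hg' * εg - (hg' * Mg) ^ 2 / 2 = εg ^ 2 / (2 * Mg ^ 2) := by
    rw [hhg']
    field_simp
    ring
  simp only [BregmanV]
  simp only [inner_sub_left, inner_add_left, inner_sub_right, real_inner_smul_left]
    at hopt hstrong hstep hcs' ⊢
  nlinarith
end

section
/- Deterministic master inequality for mirror descent with functional constraints: under the deterministic mirror descent setup, for every u ∈ Q with g(u) ≤ 0, h_f · Σ_{k∈I} (f(x^k) − f(u)) ≤ ε_f · h_f · N_I + V_{x¹}(u) − (ε_g²/(2M_g²))·N. -/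
/-!
Each mirror step `z = Mirr_x(v)` satisfies, for all `u ∈ Q`,
`⟪v, x - u⟫ ≤ ‖v‖² / 2 + V_x(u) - V_z(u)` (`IsMirrorStep.inner_le`). This combines the first-order
optimality condition of the step (`IsMirrorStep.variational`), the three-point identity for Bregman
divergences, and strong convexity. With the chosen step sizes `‖v‖ ≤ ε_g / M_g` at every step.
A productive step then bounds `h_f (f(x^k) - f(u))` by `V_{x^k}(u) - V_{x^{k+1}}(u)` plus
`ε_g² / (2 M_g²) = ε_f h_f - ε_g² / (2 M_g²)`. At a non-productive step
`h_g (g(x^k) - g(u)) > ε_g² / M_g²`, so the divergence to `u` drops by at least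
`ε_g² / (2 M_g²)`. Summing over `k` telescopes the divergences, and the last one is nonnegative.
-/

open RealInnerProductSpace Finset

/-- `z = Mirr_x(v)`: `z` minimizes `y ↦ ⟪v, y - x⟫ + V_x(y)` over `Q`. -/
def IsMirrorStep {E : Type*} [NormedAddCommGroup E] [InnerProductSpace ℝ E]
    (Q : Set E) (d : E → ℝ) (Dd : E → E) (x v z : E) : Prop :=
  z ∈ Q ∧ ∀ y ∈ Q, ⟪v, z - x⟫ + BregmanV d Dd x z ≤ ⟪v, y - x⟫ + BregmanV d Dd x y

/-- First-order optimality: the gradient at `z` of the objective of the mirror step makes a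
nonnegative inner product with every direction pointing into `Q`. -/
theorem IsMirrorStep.variational
    {E : Type*} [NormedAddCommGroup E] [InnerProductSpace ℝ E] [CompleteSpace E]
    {Q : Set E} (hQcv : Convex ℝ Q) {d : E → ℝ} {Dd : E → E}
    (hdiff : ∀ z, HasGradientAt d (Dd z) z) {x v z u : E}
    (hz : IsMirrorStep Q d Dd x v z) (hu : u ∈ Q) :
    0 ≤ ⟪v, u - z⟫ + ⟪Dd z, u - z⟫ - ⟪Dd x, u - z⟫ := by
  have hmin : IsLocalMinOn (fun y => ⟪v, y - x⟫ + BregmanV d Dd x y) Q z :=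
    IsMinOn.localize (fun y hy => hz.2 y hy)
  have hlin (w : E) : HasFDerivAt (fun y => ⟪w, y - x⟫) (innerSL ℝ w) z :=
    (innerSL ℝ w).hasFDerivAt.comp z ((hasFDerivAt_id z).sub_const x)
  have hder := (hlin v).add (((hdiff z).hasFDerivAt.sub_const (d x)).sub (hlin (Dd x)))
  have hpos := hmin.hasFDerivWithinAt_nonneg hder.hasFDerivWithinAt
    (sub_mem_posTangentConeAt_of_segment_subset (hQcv.segment_subset hz.1 hu))
  simp at hpos
  linarith

/-- The one-step inequality of mirror descent. -/
theorem IsMirrorStep.inner_le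
    {E : Type*} [NormedAddCommGroup E] [InnerProductSpace ℝ E] [CompleteSpace E]
    {Q : Set E} (hQcv : Convex ℝ Q) {d : E → ℝ} {Dd : E → E}
    (hdiff : ∀ z, HasGradientAt d (Dd z) z)
    (hsc : ∀ z y, d y ≥ d z + ⟪Dd z, y - z⟫ + (1 / 2) * ‖y - z‖ ^ 2)
    {x v z u : E} (hz : IsMirrorStep Q d Dd x v z) (hu : u ∈ Q) :
    ⟪v, x - u⟫ ≤ ‖v‖ ^ 2 / 2 + BregmanV d Dd x u - BregmanV d Dd z u := by
  have hvar := hz.variational hQcv hdiff hu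
  have hstrong := hsc x z
  have hsplit (w : E) : ⟪w, u - x⟫ = ⟪w, u - z⟫ + ⟪w, z - x⟫ := by
    rw [← inner_add_right, sub_add_sub_cancel]
  have hneg : ⟪v, x - u⟫ = -⟪v, u - x⟫ := by rw [← inner_neg_right, neg_sub]
  have hyoung : 0 ≤ ‖v‖ ^ 2 + 2 * ⟪v, z - x⟫ + ‖z - x‖ ^ 2 := by
    rw [← norm_add_sq_real]
    positivity
  have h1 := hsplit v
  have h2 := hsplit (Dd x)
  unfold BregmanV
  linarith

/-- The form of the one-step inequality shared by productive steps (`φ = f`) and non-productive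
steps (`φ = g`). Here `M` bounds the subgradient `G` of `φ` at `x`, and `r = s * M` bounds
`‖s • G‖`; the step sizes `h_f` and `h_g` give the same `r = ε_g / M_g`. -/
theorem IsMirrorStep.subgradient_le
    {E : Type*} [NormedAddCommGroup E] [InnerProductSpace ℝ E] [CompleteSpace E]
    {Q : Set E} (hQcv : Convex ℝ Q) {d : E → ℝ} {Dd : E → E}
    (hdiff : ∀ z, HasGradientAt d (Dd z) z)
    (hsc : ∀ z y, d y ≥ d z + ⟪Dd z, y - z⟫ + (1 / 2) * ‖y - z‖ ^ 2)
    {φ : E → ℝ} {s M r : ℝ} (hs : 0 ≤ s) (hr : s * M = r) {x G z u : E}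
    (hG : ‖G‖ ≤ M) (hsub : φ x + ⟪G, u - x⟫ ≤ φ u)
    (hz : IsMirrorStep Q d Dd x (s • G) z) (hu : u ∈ Q) :
    s * (φ x - φ u) ≤ r ^ 2 / 2 + BregmanV d Dd x u - BregmanV d Dd z u := by
  have hstep := hz.inner_le hQcv hdiff hsc hu
  have hnorm : ‖s • G‖ ^ 2 ≤ r ^ 2 := by
    rw [norm_smul, Real.norm_of_nonneg hs, ← hr]
    gcongr
  have hinner : ⟪s • G, x - u⟫ = s * ⟪G, x - u⟫ := real_inner_smul_left _ _ _
  have hneg : ⟪G, x - u⟫ = -⟪G, u - x⟫ := by rw [← inner_neg_right, neg_sub]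
  have hmul : s * (φ x - φ u) ≤ s * ⟪G, x - u⟫ :=
    mul_le_mul_of_nonneg_left (by linarith) hs
  linarith

/-- **Deterministic master inequality for mirror descent with functional constraints.**
Under the deterministic mirror descent setup, for every `u ∈ Q` with `g(u) ≤ 0`,
`h_f · Σ_{k∈I} (f(x^k) - f(u)) ≤ ε_f·h_f·N_I + V_{x¹}(u) - (ε_g²/(2M_g²))·N`. -/
theorem mirror_descent_deterministic_master_inequality
    {E : Type*} [NormedAddCommGroup E] [InnerProductSpace ℝ E] [CompleteSpace E]
    (Q : Set E) (hQne : Q.Nonempty) (hQcl : IsClosed Q) (hQcv : Convex ℝ Q)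
    (d : E → ℝ) (Dd : E → E) (hdiff : ∀ z, HasGradientAt d (Dd z) z)
    (hsc : ∀ z y, d y ≥ d z + ⟪Dd z, y - z⟫ + (1 / 2) * ‖y - z‖ ^ 2)
    (f g : E → ℝ) (hf : ConvexOn ℝ Q f) (hg : ConvexOn ℝ Q g)
    (Df Dg : E → E)
    (hDf : ∀ z ∈ Q, ∀ u ∈ Q, f z + ⟪Df z, u - z⟫ ≤ f u)
    (hDg : ∀ z ∈ Q, ∀ u ∈ Q, g z + ⟪Dg z, u - z⟫ ≤ g u)
    (Mf Mg : ℝ) (hMf : 0 < Mf) (hMg : 0 < Mg)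
    (hDfb : ∀ z ∈ Q, ‖Df z‖ ≤ Mf) (hDgb : ∀ z ∈ Q, ‖Dg z‖ ≤ Mg)
    (εg εf sf sg : ℝ) (hεg : 0 < εg)
    (hεf : εf = Mf * εg / Mg) (hsf : sf = εg / (Mf * Mg)) (hsg : sg = εg / Mg ^ 2)
    (N : ℕ) (x : ℕ → E)
    (hx1Q : x 1 ∈ Q) (hx1min : ∀ y ∈ Q, d (x 1) ≤ d y)
    (hiter : ∀ k, 1 ≤ k → k ≤ N →
      (g (x k) ≤ εg → IsMirrorStep Q d Dd (x k) (sf • Df (x k)) (x (k + 1))) ∧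
      (εg < g (x k) → IsMirrorStep Q d Dd (x k) (sg • Dg (x k)) (x (k + 1))))
    (I : Finset ℕ) (hI : I = (Finset.Icc 1 N).filter fun k => g (x k) ≤ εg)
    (u : E) (huQ : u ∈ Q) (hgu : g u ≤ 0) :
    sf * ∑ k ∈ I, (f (x k) - f u) ≤
      εf * sf * I.card + BregmanV d Dd (x 1) u - εg ^ 2 / (2 * Mg ^ 2) * N := by
  have hsf0 : 0 ≤ sf := by rw [hsf]; positivity
  have hsg0 : 0 ≤ sg := by rw [hsg]; positivity
  have hsfM : sf * Mf = εg / Mg := by rw [hsf]; field_simp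
  have hsgM : sg * Mg = εg / Mg := by rw [hsg]; field_simp
  have hεs : εf * sf = (εg / Mg) ^ 2 := by rw [hεf, hsf]; field_simp
  have hsε : sg * εg = (εg / Mg) ^ 2 := by rw [hsg]; field_simp
  have hc : εg ^ 2 / (2 * Mg ^ 2) = (εg / Mg) ^ 2 / 2 := by field_simp
  have hmem (k : ℕ) (hk : 1 ≤ k) (hkN : k ≤ N + 1) : x k ∈ Q := by
    induction k, hk using Nat.le_induction with
    | base => exact hx1Q
    | succ k hk _ =>
      rcases le_or_gt (g (x k)) εg with h | h
      · exact ((hiter k hk (by omega)).1 h).1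
      · exact ((hiter k hk (by omega)).2 h).1
  -- Both kinds of steps in one inequality, with the indicator of `I` written as `ite`.
  have hstep (k : ℕ) (hk : 1 ≤ k) (hkN : k ≤ N) :
      (if g (x k) ≤ εg then sf * (f (x k) - f u) - εf * sf else 0) ≤
        BregmanV d Dd (x k) u - BregmanV d Dd (x (k + 1)) u - (εg / Mg) ^ 2 / 2 := by
    have hxk := hmem k hk (by omega)
    split_ifs with h
    · have := IsMirrorStep.subgradient_le hQcv hdiff hsc hsf0 hsfM (hDfb _ hxk)
        (hDf _ hxk u huQ) ((hiter k hk hkN).1 h) huQ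
      linarith
    · have hgt := not_le.1 h
      have := IsMirrorStep.subgradient_le hQcv hdiff hsc hsg0 hsgM (hDgb _ hxk)
        (hDg _ hxk u huQ) ((hiter k hk hkN).2 hgt) huQ
      have hdrop : sg * εg ≤ sg * (g (x k) - g u) :=
        mul_le_mul_of_nonneg_left (by linarith) hsg0
      linarith
  have hsum := Finset.sum_le_sum fun k (hk : k ∈ Finset.Icc 1 N) =>
    hstep k (Finset.mem_Icc.1 hk).1 (Finset.mem_Icc.1 hk).2
  have htel (n : ℕ) :
      ∑ k ∈ Finset.Icc 1 n, (BregmanV d Dd (x k) u - BregmanV d Dd (x (k + 1)) u) =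
        BregmanV d Dd (x 1) u - BregmanV d Dd (x (n + 1)) u := by
    induction n with
    | zero => simp
    | succ n ih => rw [Finset.sum_Icc_succ_top (by omega), ih]; ring
  rw [← Finset.sum_filter, ← hI, Finset.sum_sub_distrib (s := I), ← Finset.mul_sum,
    Finset.sum_sub_distrib (s := Finset.Icc 1 N), htel] at hsum
  simp only [Finset.sum_const, Nat.card_Icc, Nat.add_sub_cancel, nsmul_eq_mul] at hsum
  have hlast : 0 ≤ BregmanV d Dd (x (N + 1)) u := by
    have := hsc (x (N + 1)) u
    have : 0 ≤ ‖u - x (N + 1)‖ ^ 2 := by positivity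
    unfold BregmanV
    linarith
  rw [hc]
  linarith
end

section
/- Deterministic convergence of mirror descent with functional constraints: under the deterministic mirror descent setup, suppose additionally that x_* ∈ Q satisfies g(x_*) ≤ 0 and f(x_*) ≤ f(x) for all x ∈ Q with g(x) ≤ 0, and set R² = V_{x¹}(x_*). If N > 2 M_g² R² / ε_g², then N_I ≥ 1 and the averaged point x̄^N = (1/N_I) Σ_{k∈I} x^k satisfies f(x̄^N) − f(x_*) ≤ ε_f and g(x̄^N) ≤ ε_g. -/
/-!
Each mirror step with vector `v` decreases the Bregman distance to any `u ∈ Q` by at least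
`⟪v, x - u⟫ - ‖v‖² / 2`: this combines the first-order optimality condition of the prox-step, the
three-point identity for `V`, and the strong convexity bound `V_x(z) ≥ ‖z - x‖² / 2`
(`mirror_step_bound`).

Put `c = ε_g² / M_g²`. Both step sizes are tuned so that `‖v‖² / 2 ≤ c / 2`. On a step `k ∈ I` the
gain is thus at least `h_f (f(x^k) - f(x_*)) - c / 2`; on a step `k ∈ J` one has
`g(x^k) - g(x_*) > ε_g`, so the gain is at least `h_g ε_g - c / 2 = c / 2`. Telescoping
(`mirror_telescope`) gives
`∑_{k ∈ I} (h_f (f(x^k) - f(x_*)) - c) + N c / 2 ≤ R²`, and `R² < N c / 2` makes the sum over `I`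
negative. Hence `I` is nonempty, and since `h_f ε_f = c` the mean of `f(x^k)` over `I` is below
`f(x_*) + ε_f`. Jensen's inequality transfers the bounds on `f` and `g` to the average.
-/

open RealInnerProductSpace Finset

section MirrorDescent

variable {E : Type*} [NormedAddCommGroup E] [InnerProductSpace ℝ E]

lemma half_sq_le_bregmanV {d : E → ℝ} {Dd : E → E}
    (hsc : ∀ z y, d y ≥ d z + ⟪Dd z, y - z⟫ + (1 / 2) * ‖y - z‖ ^ 2) (z y : E) :
    (1 / 2) * ‖y - z‖ ^ 2 ≤ BregmanV d Dd z y := by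
  have := hsc z y
  unfold BregmanV
  linarith

/-- First-order optimality condition (variational inequality) for the prox-step. -/
lemma mirror_step_optimality_s7 [CompleteSpace E] {Q : Set E} (hQcv : Convex ℝ Q)
    {d : E → ℝ} {Dd : E → E} (hdiff : ∀ z, HasGradientAt d (Dd z) z)
    {x v z u : E} (h : IsMirrorStep Q d Dd x v z) (hu : u ∈ Q) :
    0 ≤ ⟪v - Dd x + Dd z, u - z⟫ := by
  have hmin : IsMinOn (fun y => ⟪v - Dd x, y⟫ + d y) Q z := by
    intro y hy
    have := h.2 y hy
    simp only [BregmanV, inner_sub_right] at this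
    simp only [Set.mem_ofPred_eq, inner_sub_left]
    linarith
  have hder : HasFDerivAt (fun y => ⟪v - Dd x, y⟫ + d y)
      (innerSL ℝ (v - Dd x) + InnerProductSpace.toDual ℝ E (Dd z)) z :=
    (innerSL ℝ (v - Dd x)).hasFDerivAt.add (hdiff z).hasFDerivAt
  have := hmin.localize.hasFDerivWithinAt_nonneg hder.hasFDerivWithinAt
    (sub_mem_posTangentConeAt_of_segment_subset (hQcv.segment_subset h.1 hu))
  simpa [inner_add_left, inner_sub_left] using this

/-- Progress of one mirror step, measured by the Bregman distance to a point of `Q`. -/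
lemma mirror_step_bound [CompleteSpace E] {Q : Set E} (hQcv : Convex ℝ Q)
    {d : E → ℝ} {Dd : E → E} (hdiff : ∀ z, HasGradientAt d (Dd z) z)
    (hsc : ∀ z y, d y ≥ d z + ⟪Dd z, y - z⟫ + (1 / 2) * ‖y - z‖ ^ 2)
    {x v z u : E} (h : IsMirrorStep Q d Dd x v z) (hu : u ∈ Q) :
    ⟪v, x - u⟫ - ‖v‖ ^ 2 / 2 ≤ BregmanV d Dd x u - BregmanV d Dd z u := by
  have h1 := mirror_step_optimality_s7 hQcv hdiff h hu
  have h2 := half_sq_le_bregmanV hsc x z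
  -- Young's inequality for `⟪v, x - z⟫`, from `0 ≤ ‖v + (z - x)‖²`.
  have h3 : 0 ≤ ‖v‖ ^ 2 + 2 * ⟪v, z - x⟫ + ‖z - x‖ ^ 2 := by
    rw [← norm_add_sq_real]
    positivity
  simp only [BregmanV, inner_sub_right, inner_sub_left, inner_add_left] at *
  linarith

/-- A mirror step along `s • w`, where `w` is a subgradient at `x` of norm at most `M` of a
function `φ`, with `s M` equal to a prescribed length `l`. -/
lemma subgradient_step_bound [CompleteSpace E] {Q : Set E} (hQcv : Convex ℝ Q)
    {d : E → ℝ} {Dd : E → E} (hdiff : ∀ z, HasGradientAt d (Dd z) z)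
    (hsc : ∀ z y, d y ≥ d z + ⟪Dd z, y - z⟫ + (1 / 2) * ‖y - z‖ ^ 2)
    {φ : E → ℝ} {x w z u : E} {s M l : ℝ} (hs : 0 ≤ s) (hl : s * M = l) (hw : ‖w‖ ≤ M)
    (hsub : φ x + ⟪w, u - x⟫ ≤ φ u)
    (h : IsMirrorStep Q d Dd x (s • w) z) (hu : u ∈ Q) :
    s * (φ x - φ u) - l ^ 2 / 2 ≤ BregmanV d Dd x u - BregmanV d Dd z u := by
  have h1 := mirror_step_bound hQcv hdiff hsc h hu
  have h2 : ‖s • w‖ ≤ l := by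
    rw [norm_smul, Real.norm_of_nonneg hs, ← hl]
    gcongr
  have h3 : ‖s • w‖ ^ 2 ≤ l ^ 2 := by gcongr
  have h4 : φ x - φ u ≤ ⟪w, x - u⟫ := by
    rw [← neg_sub u x, inner_neg_right]
    linarith
  have h5 := mul_le_mul_of_nonneg_left h4 hs
  rw [real_inner_smul_left] at h1
  linarith

lemma mirror_telescope (N : ℕ) (a W : ℕ → ℝ)
    (h : ∀ k, 1 ≤ k → k ≤ N → a k ≤ W k - W (k + 1)) :
    ∑ k ∈ Finset.Icc 1 N, a k ≤ W 1 - W (N + 1) := by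
  induction N with
  | zero => simp
  | succ n ih =>
    rw [Finset.sum_Icc_succ_top (by omega)]
    have h1 := ih fun k hk hkn => h k hk (by omega)
    have h2 := h (n + 1) (by omega) le_rfl
    linarith

/-- Jensen's inequality for a uniform average. -/
lemma map_average_le {Q : Set E} {φ : E → ℝ} (hφ : ConvexOn ℝ Q φ) {I : Finset ℕ}
    (hI : 0 < I.card) {x : ℕ → E} (hx : ∀ k ∈ I, x k ∈ Q) {b : ℝ}
    (hb : ∑ k ∈ I, φ (x k) ≤ I.card * b) :
    φ ((I.card : ℝ)⁻¹ • ∑ k ∈ I, x k) ≤ b := by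
  have hc : (0 : ℝ) < I.card := by exact_mod_cast hI
  have h1 := hφ.map_sum_le (t := I) (w := fun _ => (I.card : ℝ)⁻¹) (p := x)
    (fun _ _ => by positivity) (by simp [hc.ne']) hx
  rw [← Finset.smul_sum, ← Finset.smul_sum, smul_eq_mul] at h1
  refine h1.trans ?_
  rw [inv_mul_le_iff₀ hc]
  exact hb

end MirrorDescent

/-- **Deterministic convergence of mirror descent with functional constraints.**
Under the deterministic mirror descent setup, if `x_*` solves the constrained problem,
`R² = V_{x¹}(x_*)`, and `N > 2M_g²R²/ε_g²`, then `N_I ≥ 1` and the averaged point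
`x̄^N = (1/N_I) Σ_{k∈I} x^k` satisfies `f(x̄^N) - f(x_*) ≤ ε_f` and `g(x̄^N) ≤ ε_g`. -/
theorem mirror_descent_deterministic_convergence
    {E : Type*} [NormedAddCommGroup E] [InnerProductSpace ℝ E] [CompleteSpace E]
    (Q : Set E) (hQne : Q.Nonempty) (hQcl : IsClosed Q) (hQcv : Convex ℝ Q)
    (d : E → ℝ) (Dd : E → E) (hdiff : ∀ z, HasGradientAt d (Dd z) z)
    (hsc : ∀ z y, d y ≥ d z + ⟪Dd z, y - z⟫ + (1 / 2) * ‖y - z‖ ^ 2)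
    (f g : E → ℝ) (hf : ConvexOn ℝ Q f) (hg : ConvexOn ℝ Q g)
    (Df Dg : E → E)
    (hDf : ∀ z ∈ Q, ∀ u ∈ Q, f z + ⟪Df z, u - z⟫ ≤ f u)
    (hDg : ∀ z ∈ Q, ∀ u ∈ Q, g z + ⟪Dg z, u - z⟫ ≤ g u)
    (Mf Mg : ℝ) (hMf : 0 < Mf) (hMg : 0 < Mg)
    (hDfb : ∀ z ∈ Q, ‖Df z‖ ≤ Mf) (hDgb : ∀ z ∈ Q, ‖Dg z‖ ≤ Mg)
    (εg εf sf sg : ℝ) (hεg : 0 < εg)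
    (hεf : εf = Mf * εg / Mg) (hsf : sf = εg / (Mf * Mg)) (hsg : sg = εg / Mg ^ 2)
    (N : ℕ) (x : ℕ → E)
    (hx1Q : x 1 ∈ Q) (hx1min : ∀ y ∈ Q, d (x 1) ≤ d y)
    (hiter : ∀ k, 1 ≤ k → k ≤ N →
      (g (x k) ≤ εg → IsMirrorStep Q d Dd (x k) (sf • Df (x k)) (x (k + 1))) ∧
      (εg < g (x k) → IsMirrorStep Q d Dd (x k) (sg • Dg (x k)) (x (k + 1))))
    (I : Finset ℕ) (hI : I = (Finset.Icc 1 N).filter fun k => g (x k) ≤ εg)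
    (xstar : E) (hxstarQ : xstar ∈ Q) (hgxstar : g xstar ≤ 0)
    (hxstaropt : ∀ y ∈ Q, g y ≤ 0 → f xstar ≤ f y)
    (R2 : ℝ) (hR2 : R2 = BregmanV d Dd (x 1) xstar)
    (hN : (N : ℝ) > 2 * Mg ^ 2 * R2 / εg ^ 2)
    (xbar : E) (hxbar : xbar = (I.card : ℝ)⁻¹ • ∑ k ∈ I, x k) :
    1 ≤ I.card ∧ f xbar - f xstar ≤ εf ∧ g xbar ≤ εg := by
  have hxQ : ∀ k, 1 ≤ k → k ≤ N → x k ∈ Q := by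
    intro k hk hkN
    rcases Nat.exists_eq_add_of_le' hk with ⟨j, rfl⟩
    rcases Nat.eq_zero_or_pos j with rfl | hj
    · exact hx1Q
    · rcases le_or_gt (g (x j)) εg with h | h
      · exact ((hiter j hj (by omega)).1 h).1
      · exact ((hiter j hj (by omega)).2 h).1
  have hIQ : ∀ k ∈ I, x k ∈ Q := by
    intro k hk
    simp only [hI, Finset.mem_filter, Finset.mem_Icc] at hk
    exact hxQ k hk.1.1 hk.1.2
  have hsfpos : 0 < sf := by rw [hsf]; positivity
  have hsgpos : 0 < sg := by rw [hsg]; positivity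
  -- Both kinds of step have length at most `l`; the constant `c` of the introduction is `l ^ 2`.
  obtain ⟨l, hl⟩ : ∃ l, l = εg / Mg := ⟨_, rfl⟩
  have hlf : sf * Mf = l := by rw [hsf, hl]; field_simp
  have hlg : sg * Mg = l := by rw [hsg, hl]; field_simp
  have hcf : sf * εf = l ^ 2 := by rw [hsf, hl, hεf]; field_simp
  have hcg : sg * εg = l ^ 2 := by rw [hsg, hl]; field_simp
  have hRN : R2 < N * (l ^ 2 / 2) := by
    rw [gt_iff_lt, div_lt_iff₀ (by positivity)] at hN
    rw [hl, div_pow, div_div, ← mul_div_assoc, lt_div_iff₀ (by positivity)]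
    linarith
  have hstep : ∀ k, 1 ≤ k → k ≤ N →
      (if g (x k) ≤ εg then sf * (f (x k) - f xstar) - l ^ 2 else 0) + l ^ 2 / 2 ≤
        BregmanV d Dd (x k) xstar - BregmanV d Dd (x (k + 1)) xstar := by
    intro k hk hkN
    have hkQ := hxQ k hk hkN
    split_ifs with h
    · have := subgradient_step_bound hQcv hdiff hsc hsfpos.le hlf (hDfb _ hkQ)
        (hDf _ hkQ _ hxstarQ) ((hiter k hk hkN).1 h) hxstarQ
      linarith
    · have h' := not_le.1 h
      have h1 := subgradient_step_bound hQcv hdiff hsc hsgpos.le hlg (hDgb _ hkQ)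
        (hDg _ hkQ _ hxstarQ) ((hiter k hk hkN).2 h') hxstarQ
      have h2 : sg * εg ≤ sg * (g (x k) - g xstar) := by gcongr; linarith
      linarith
  have hsum := mirror_telescope N _ (fun k => BregmanV d Dd (x k) xstar) hstep
  have hlast : 0 ≤ BregmanV d Dd (x (N + 1)) xstar :=
    le_trans (by positivity) (half_sq_le_bregmanV hsc _ _)
  rw [Finset.sum_add_distrib, ← Finset.sum_filter, ← hI, Finset.sum_const, Nat.card_Icc,
    Nat.add_sub_cancel, nsmul_eq_mul] at hsum
  have hneg : ∑ k ∈ I, (sf * (f (x k) - f xstar) - l ^ 2) < 0 := by linarith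
  have hcard : 0 < I.card := by
    rw [Finset.card_pos, Finset.nonempty_iff_ne_empty]
    intro h0
    simp [h0] at hneg
  have hfsum : ∑ k ∈ I, f (x k) ≤ I.card * (f xstar + εf) := by
    have h1 : ∑ k ∈ I, (sf * (f (x k) - f xstar) - l ^ 2) =
        sf * (∑ k ∈ I, f (x k) - I.card * (f xstar + εf)) := by
      simp only [← hcf, ← mul_sub, ← Finset.mul_sum, Finset.sum_sub_distrib, Finset.sum_const,
        nsmul_eq_mul]
      ring
    rw [h1] at hneg
    have := neg_of_mul_neg_right hneg hsfpos.le
    linarith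
  have hgsum : ∑ k ∈ I, g (x k) ≤ I.card * εg := by
    rw [← nsmul_eq_mul]
    refine Finset.sum_le_card_nsmul _ _ _ fun k hk => ?_
    rw [hI, Finset.mem_filter] at hk
    exact hk.2
  rw [hxbar]
  refine ⟨hcard, ?_, map_average_le hg hcard hIQ hgsum⟩
  have := map_average_le hf hcard hIQ hfsum
  linarith
end

section
/- Strong-convexity localization of approximate solutions (key observation of Remark 7): let E be a real Hilbert space, Q ⊆ E a convex set, μ > 0, and let f, g : E → ℝ be μ-strongly convex on Q, i.e. f(t·x + (1−t)·y) ≤ t·f(x) + (1−t)·f(y) − (μ/2)·t(1−t)·‖x − y‖² for all x, y ∈ Q and t ∈ [0,1], and similarly for g. Assume Slater's condition: there exists x̃ ∈ Q with g(x̃) < 0. Let x_* ∈ Q satisfy g(x_*) ≤ 0 and f(x_*) ≤ f(y) for all y ∈ Q with g(y) ≤ 0. If x ∈ Q satisfies f(x) − f(x_*) ≤ ε_f and g(x) ≤ ε_g, where ε_f, ε_g ≥ 0, then (μ/2)·‖x − x_*‖² ≤ max{ε_f, ε_g}. -/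
/-!
Put `D = μ / 2 * ‖x - xstar‖ ^ 2` and `M = max εf εg`. At the point
`y = t • x + (1 - t) • xstar` of the segment from `xstar` to `x`, strong convexity gives
`f y - f xstar ≤ t * (εf - (1 - t) * D)` and `g y ≤ t * (εg - (1 - t) * D)`.
If `M < D`, then for small `t > 0` both right-hand sides are negative, so `y` is feasible with
a value of `f` below the optimum, a contradiction.
-/

/-- **Strong-convexity localization of approximate solutions (Remark 7).**
Let `E` be a real Hilbert space, `Q ⊆ E` convex, `μ > 0`, and let `f, g` be
`μ`-strongly convex on `Q`. Assume Slater's condition (`∃ x̃ ∈ Q, g(x̃) < 0`) and let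
`x_*` solve `min {f(y) : y ∈ Q, g(y) ≤ 0}`. If `x ∈ Q` satisfies `f(x) - f(x_*) ≤ ε_f`
and `g(x) ≤ ε_g` with `ε_f, ε_g ≥ 0`, then `(μ/2)‖x - x_*‖² ≤ max{ε_f, ε_g}`. -/
theorem strongly_convex_localization
    {E : Type*} [NormedAddCommGroup E] [InnerProductSpace ℝ E] [CompleteSpace E]
    (Q : Set E) (hQcv : Convex ℝ Q)
    (μ : ℝ) (hμ : 0 < μ)
    (f g : E → ℝ)
    (hf : ∀ x ∈ Q, ∀ y ∈ Q, ∀ t : ℝ, 0 ≤ t → t ≤ 1 →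
      f (t • x + (1 - t) • y) ≤ t * f x + (1 - t) * f y - μ / 2 * (t * (1 - t)) * ‖x - y‖ ^ 2)
    (hg : ∀ x ∈ Q, ∀ y ∈ Q, ∀ t : ℝ, 0 ≤ t → t ≤ 1 →
      g (t • x + (1 - t) • y) ≤ t * g x + (1 - t) * g y - μ / 2 * (t * (1 - t)) * ‖x - y‖ ^ 2)
    (hslater : ∃ xtil ∈ Q, g xtil < 0)
    (xstar : E) (hxstarQ : xstar ∈ Q) (hgxstar : g xstar ≤ 0)
    (hxstaropt : ∀ y ∈ Q, g y ≤ 0 → f xstar ≤ f y)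
    (εf εg : ℝ) (hεf : 0 ≤ εf) (hεg : 0 ≤ εg)
    (x : E) (hxQ : x ∈ Q) (hfx : f x - f xstar ≤ εf) (hgx : g x ≤ εg) :
    μ / 2 * ‖x - xstar‖ ^ 2 ≤ max εf εg := by
  by_contra! hlt
  set D : ℝ := μ / 2 * ‖x - xstar‖ ^ 2 with hD
  set M : ℝ := max εf εg with hM
  have hfM : εf ≤ M := le_max_left _ _
  have hgM : εg ≤ M := le_max_right _ _
  have hDpos : 0 < D := by linarith
  -- This `t` makes `(1 - t) * D` the midpoint of `M` and `D`, hence larger than `M`.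
  obtain ⟨t, ht0, ht1, htD⟩ : ∃ t : ℝ, 0 < t ∧ t ≤ 1 ∧ M < (1 - t) * D := by
    refine ⟨(D - M) / (2 * D), div_pos (by linarith) (by linarith), ?_, ?_⟩
    · rw [div_le_one (by linarith)]
      linarith
    · have h : (1 - (D - M) / (2 * D)) * D = (D + M) / 2 := by
        field_simp
        ring
      linarith
  have hyQ : t • x + (1 - t) • xstar ∈ Q :=
    hQcv hxQ hxstarQ ht0.le (by linarith) (by ring)
  have hfy := hf x hxQ xstar hxstarQ t ht0.le ht1
  have hgy := hg x hxQ xstar hxstarQ t ht0.le ht1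
  have hmod : μ / 2 * (t * (1 - t)) * ‖x - xstar‖ ^ 2 = t * ((1 - t) * D) := by
    rw [hD]
    ring
  rw [hmod] at hfy hgy
  have hfeas : g (t • x + (1 - t) • xstar) ≤ 0 := by
    have h1 : t * g x ≤ t * ((1 - t) * D) :=
      mul_le_mul_of_nonneg_left (by linarith) ht0.le
    have h2 : (1 - t) * g xstar ≤ 0 :=
      mul_nonpos_of_nonneg_of_nonpos (by linarith) hgxstar
    linarith
  have hopt := hxstaropt _ hyQ hfeas
  have h3 : t * (f x - f xstar) < t * ((1 - t) * D) :=
    mul_lt_mul_of_pos_left (by linarith) ht0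
  linarith
end
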